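/- arXiv:math/0105055 — 6 statements merged into one kernel-verified Lean document; each statement's English description precedes it below -/
import Mathlib

section
/- Let n ≥ 2 be a natural number and let λ, R₀ be real numbers, and let ν₀ > 0 and μ₀ > 0 be real numbers. Suppose that for every real number t one has ((n−1)/n)·λ² − R₀/4 − ν₀·t + n²·μ₀²·(λ² − R₀/4)·t² ≥ 0. Then λ² ≥ n·R₀/(4(n−1)) + 2·ν₀² / ( n·μ₀²·( R₀ + Real.sqrt( R₀² + ((n−1)/n)·(4ν₀/μ₀)² ) ) ). -/
/-!
Write `Λ = λ²` and let `x = 4 (n - 1) Λ - n R` measure by how much `Λ` exceeds Friedrich's bound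
`n R / (4 (n - 1))`. The constant and leading coefficients of the quadratic in `t` are
`x / (4 n)` and `n² μ² (x + R) / (4 (n - 1))`. Nonnegativity at `t = 0` gives `0 ≤ x`, and
nonpositivity of the discriminant gives `c ≤ x (x + R)` with `c = (n - 1) / n * (2 ν / μ)²`. Hence
`x` is at least the positive root of `X² + R X = c`, which after rationalising the numerator is
`2 c / (R + √(R² + 4 c))`; dividing by `4 (n - 1)` gives the estimate.
-/

theorem add_sqrt_sq_add_pos (b : ℝ) {c : ℝ} (hc : 0 < c) : 0 < b + √(b ^ 2 + c) := by
  have hroot : -√(b ^ 2 + c) < b := Real.neg_sqrt_lt_of_sq_lt (lt_add_of_pos_right _ hc)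
  linarith

theorem sqrt_sq_add_four_mul_le {b c x : ℝ} (hx : 0 ≤ 2 * x + b) (h : c ≤ x * (x + b)) :
    √(b ^ 2 + 4 * c) ≤ 2 * x + b :=
  Real.sqrt_le_iff.2 ⟨hx, by linarith⟩

theorem two_mul_div_add_sqrt_eq (b : ℝ) {c : ℝ} (hc : 0 < c) :
    2 * c / (b + √(b ^ 2 + 4 * c)) = (√(b ^ 2 + 4 * c) - b) / 2 := by
  have hsq : √(b ^ 2 + 4 * c) ^ 2 = b ^ 2 + 4 * c := Real.sq_sqrt (by positivity)
  rw [div_eq_iff (add_sqrt_sq_add_pos b (by positivity)).ne']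
  linarith

theorem two_mul_div_add_sqrt_le {b c x : ℝ} (hc : 0 < c) (hx : 0 ≤ x) (h : c ≤ x * (x + b)) :
    2 * c / (b + √(b ^ 2 + 4 * c)) ≤ x := by
  have hxb : 0 < x + b := pos_of_mul_pos_right (hc.trans_le h) hx
  rw [two_mul_div_add_sqrt_eq b hc]
  linarith [sqrt_sq_add_four_mul_le (by linarith) h]

/-- The excess of `Λ` over Friedrich's lower bound `n R / (4 (n - 1))` for the square of a Dirac
eigenvalue in dimension `n` and scalar curvature at least `R`, scaled by `4 (n - 1)` to be free of
denominators. The dimension is allowed to be any real number. -/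
def friedrichExcess (n Λ R : ℝ) : ℝ :=
  4 * (n - 1) * Λ - n * R

section

variable {n : ℝ}

theorem eq_add_friedrichExcess_div (hn : n ≠ 1) (Λ R : ℝ) :
    Λ = n * R / (4 * (n - 1)) + friedrichExcess n Λ R / (4 * (n - 1)) := by
  have hn' : n - 1 ≠ 0 := sub_ne_zero.2 hn
  rw [friedrichExcess]
  field_simp
  ring

theorem sub_div_four_eq_friedrichExcess_div (hn : n ≠ 0) (Λ R : ℝ) :
    (n - 1) / n * Λ - R / 4 = friedrichExcess n Λ R / (4 * n) := by
  rw [friedrichExcess]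
  field_simp

theorem sub_div_four_eq_friedrichExcess_add_div (hn : n ≠ 1) (Λ R : ℝ) :
    Λ - R / 4 = (friedrichExcess n Λ R + R) / (4 * (n - 1)) := by
  have hn' : n - 1 ≠ 0 := sub_ne_zero.2 hn
  rw [friedrichExcess]
  field_simp
  ring

theorem friedrichExcess_nonneg {Λ R : ℝ} (hn : 0 < n) (h : 0 ≤ (n - 1) / n * Λ - R / 4) :
    0 ≤ friedrichExcess n Λ R := by
  rw [sub_div_four_eq_friedrichExcess_div hn.ne'] at h
  simpa using (le_div_iff₀ (by positivity)).1 h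

theorem le_friedrichExcess_mul_add {Λ R ν μ : ℝ} (hn : 1 < n) (hμ : μ ≠ 0)
    (h : ∀ t : ℝ, (n - 1) / n * Λ - R / 4 - ν * t + n ^ 2 * μ ^ 2 * (Λ - R / 4) * t ^ 2 ≥ 0) :
    (n - 1) / n * (2 * ν / μ) ^ 2 ≤
      friedrichExcess n Λ R * (friedrichExcess n Λ R + R) := by
  have hn₀ : 0 < n := one_pos.trans hn
  have hn₁ : 0 < n - 1 := sub_pos.2 hn
  rw [sub_div_four_eq_friedrichExcess_div hn₀.ne',
    sub_div_four_eq_friedrichExcess_add_div hn.ne'] at h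
  set x := friedrichExcess n Λ R
  have hdiscrim : discrim (n ^ 2 * μ ^ 2 * ((x + R) / (4 * (n - 1)))) (-ν) (x / (4 * n)) ≤ 0 :=
    discrim_le_zero fun t ↦ by linarith [h t]
  rw [discrim, neg_sq, sub_nonpos] at hdiscrim
  calc (n - 1) / n * (2 * ν / μ) ^ 2
      = 4 * (n - 1) / (n * μ ^ 2) * ν ^ 2 := by field_simp; ring
    _ ≤ 4 * (n - 1) / (n * μ ^ 2) *
        (4 * (n ^ 2 * μ ^ 2 * ((x + R) / (4 * (n - 1)))) * (x / (4 * n))) := by gcongr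
    _ = x * (x + R) := by field_simp

end

theorem dirac_estimate_weyl_general {n Λ R ν μ : ℝ} (hn : 1 < n) (hν : ν ≠ 0) (hμ : μ ≠ 0)
    (h : ∀ t : ℝ, (n - 1) / n * Λ - R / 4 - ν * t + n ^ 2 * μ ^ 2 * (Λ - R / 4) * t ^ 2 ≥ 0) :
    Λ ≥ n * R / (4 * (n - 1))
      + 2 * ν ^ 2 / (n * μ ^ 2 * (R + √(R ^ 2 + (n - 1) / n * (4 * ν / μ) ^ 2))) := by
  have hn₀ : 0 < n := one_pos.trans hn
  have hn₁ : 0 < n - 1 := sub_pos.2 hn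
  set c := (n - 1) / n * (2 * ν / μ) ^ 2 with hc
  have hc₀ : 0 < c := by positivity
  have hexcess : 0 ≤ friedrichExcess n Λ R := friedrichExcess_nonneg hn₀ (by simpa using h 0)
  have hbound : 2 * c / (R + √(R ^ 2 + 4 * c)) ≤ friedrichExcess n Λ R :=
    two_mul_div_add_sqrt_le hc₀ hexcess (le_friedrichExcess_mul_add hn hμ h)
  have hfour : (n - 1) / n * (4 * ν / μ) ^ 2 = 4 * c := by rw [hc]; ring
  have hconst : 2 * c / (4 * (n - 1)) = 2 * ν ^ 2 / (n * μ ^ 2) := by rw [hc]; field_simp; ring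
  rw [hfour]
  calc n * R / (4 * (n - 1)) + 2 * ν ^ 2 / (n * μ ^ 2 * (R + √(R ^ 2 + 4 * c)))
      = n * R / (4 * (n - 1)) + 2 * c / (R + √(R ^ 2 + 4 * c)) / (4 * (n - 1)) := by
        rw [div_right_comm (2 * c), hconst, div_div (2 * ν ^ 2)]
    _ ≤ n * R / (4 * (n - 1)) + friedrichExcess n Λ R / (4 * (n - 1)) := by gcongr
    _ = Λ := (eq_add_friedrichExcess_div hn.ne' Λ R).symm

theorem dirac_estimate_weyl (n : ℕ) (hn : 2 ≤ n) (lam R₀ ν₀ μ₀ : ℝ)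
    (hν : 0 < ν₀) (hμ : 0 < μ₀)
    (h : ∀ t : ℝ, ((n : ℝ) - 1) / n * lam ^ 2 - R₀ / 4 - ν₀ * t
      + (n : ℝ) ^ 2 * μ₀ ^ 2 * (lam ^ 2 - R₀ / 4) * t ^ 2 ≥ 0) :
    lam ^ 2 ≥ (n : ℝ) * R₀ / (4 * ((n : ℝ) - 1))
      + 2 * ν₀ ^ 2 / ((n : ℝ) * μ₀ ^ 2 *
        (R₀ + Real.sqrt (R₀ ^ 2 + ((n : ℝ) - 1) / n * (4 * ν₀ / μ₀) ^ 2))) :=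
  dirac_estimate_weyl_general (Nat.one_lt_cast.2 hn) hν.ne' hμ.ne' h
end

section
/- Let n ≥ 2 be a natural number and let R₀ < 0, μ₀ > 0 and ν₀ be real numbers with ν₀ > (n/2)·|R₀|·μ₀. Then n·R₀/(4(n−1)) + 2·ν₀² / ( n·μ₀²·( R₀ + Real.sqrt( R₀² + ((n−1)/n)·(4ν₀/μ₀)² ) ) ) > 0. -/
/-!
Put `S = √(R₀² + (n - 1)/n * (4ν₀/μ₀)²)`. Rationalizing the denominator `R₀ + S` turns the bound
into `((2n - 1) R₀ + S) / (8 (n - 1))`. At the threshold `|ν₀/μ₀| = (n/2) |R₀|` the radicand is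
`(1 + 4n(n - 1)) R₀² = ((2n - 1) R₀)²`, a perfect square, so above the threshold
`S > (2n - 1) |R₀|` and the numerator is positive.
-/

theorem div_add_sqrt_sq_add {x y : ℝ} (hxy : 0 ≤ x ^ 2 + y) (hy : y ≠ 0) :
    y / (x + √(x ^ 2 + y)) = √(x ^ 2 + y) - x := by
  have factor : (√(x ^ 2 + y) - x) * (x + √(x ^ 2 + y)) = y := by
    linear_combination Real.sq_sqrt hxy
  have denom_ne : x + √(x ^ 2 + y) ≠ 0 := right_ne_zero_of_mul (factor ▸ hy)
  exact (eq_div_of_mul_eq denom_ne factor).symm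

theorem scalar_term_add_weyl_term_eq {n μ ν : ℝ} (R : ℝ) (hn : 1 < n) (hμ : μ ≠ 0) (hν : ν ≠ 0) :
    n * R / (4 * (n - 1)) +
        2 * ν ^ 2 / (n * μ ^ 2 * (R + √(R ^ 2 + (n - 1) / n * (4 * ν / μ) ^ 2))) =
      ((2 * n - 1) * R + √(R ^ 2 + (n - 1) / n * (4 * ν / μ) ^ 2)) / (8 * (n - 1)) := by
  have _ : 0 < n := by linarith
  have _ : 0 < n - 1 := sub_pos.mpr hn
  set y := (n - 1) / n * (4 * ν / μ) ^ 2 with hy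
  have y_pos : 0 < y := by positivity
  have coeff : 2 * ν ^ 2 / (n * μ ^ 2) = y / (8 * (n - 1)) := by
    rw [hy]
    field_simp
    norm_num
  calc n * R / (4 * (n - 1)) + 2 * ν ^ 2 / (n * μ ^ 2 * (R + √(R ^ 2 + y)))
      = n * R / (4 * (n - 1)) + y / (R + √(R ^ 2 + y)) / (8 * (n - 1)) := by
        rw [← div_div (2 * ν ^ 2), coeff, div_right_comm]
    _ = n * R / (4 * (n - 1)) + (√(R ^ 2 + y) - R) / (8 * (n - 1)) := by
        rw [div_add_sqrt_sq_add (by positivity) y_pos.ne']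
    _ = ((2 * n - 1) * R + √(R ^ 2 + y)) / (8 * (n - 1)) := by
        field_simp
        ring

theorem mul_abs_lt_sqrt_sq_add {n R t : ℝ} (hn : 1 < n) (ht : n / 2 * |R| < |t|) :
    (2 * n - 1) * |R| < √(R ^ 2 + (n - 1) / n * (4 * t) ^ 2) := by
  have _ : 0 < n := by linarith
  have _ : 0 < n - 1 := sub_pos.mpr hn
  apply Real.lt_sqrt_of_sq_lt
  calc ((2 * n - 1) * |R|) ^ 2
      = R ^ 2 + (n - 1) / n * (4 * (n / 2 * |R|)) ^ 2 := by
        simp only [mul_pow, sq_abs]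
        field_simp
        ring
    _ < R ^ 2 + (n - 1) / n * (4 * |t|) ^ 2 := by gcongr
    _ = R ^ 2 + (n - 1) / n * (4 * t) ^ 2 := by simp only [mul_pow, sq_abs]

theorem lower_bound_positive_of_negative_scalar_general {n R₀ μ₀ ν₀ : ℝ} (hn : 1 < n)
    (hμ : μ₀ ≠ 0) (hν : n / 2 * |R₀| * |μ₀| < |ν₀|) :
    0 < n * R₀ / (4 * (n - 1)) +
      2 * ν₀ ^ 2 / (n * μ₀ ^ 2 * (R₀ + √(R₀ ^ 2 + (n - 1) / n * (4 * ν₀ / μ₀) ^ 2))) := by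
  have hν₀ : ν₀ ≠ 0 := abs_pos.mp (lt_of_le_of_lt (by positivity) hν)
  have ratio_gt : n / 2 * |R₀| < |ν₀ / μ₀| := by
    rwa [abs_div, lt_div_iff₀ (abs_pos.mpr hμ)]
  have sqrt_gt := mul_abs_lt_sqrt_sq_add hn ratio_gt
  rw [← mul_div_assoc] at sqrt_gt
  have scalar_ge : -((2 * n - 1) * |R₀|) ≤ (2 * n - 1) * R₀ := by
    rw [← mul_neg]
    exact mul_le_mul_of_nonneg_left (neg_abs_le R₀) (by linarith)
  rw [scalar_term_add_weyl_term_eq R₀ hn hμ hν₀]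
  exact div_pos (by linarith) (by linarith)

theorem lower_bound_positive_of_negative_scalar (n : ℕ) (hn : 2 ≤ n)
    (R₀ μ₀ ν₀ : ℝ) (hR : R₀ < 0) (hμ : 0 < μ₀)
    (hν : ν₀ > (n : ℝ) / 2 * |R₀| * μ₀) :
    (n : ℝ) * R₀ / (4 * ((n : ℝ) - 1))
      + 2 * ν₀ ^ 2 / ((n : ℝ) * μ₀ ^ 2 *
        (R₀ + Real.sqrt (R₀ ^ 2 + ((n : ℝ) - 1) / n * (4 * ν₀ / μ₀) ^ 2))) > 0 :=
  lower_bound_positive_of_negative_scalar_general (Nat.one_lt_cast.mpr hn) hμ.ne'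
    ((abs_of_pos hμ).symm ▸ hν.trans_le (le_abs_self ν₀))
end

section
/- Let n ≥ 4 be a natural number and let ρ ≥ 0, ν₀ ≥ 0, σ ≥ 0, κ and R ≤ 0 be real numbers. Suppose that ((n+2)/(n−2))·ρ² + R²/(n(n−1)) + 4·n·ν₀ > |R|·( κ + n²·(n(n−1)/2)·σ ). Then there exists a real number t > 0 such that (t/(4n))·( ((n+2)/(n−2))·ρ² + R²/(n(n−1)) ) + ν₀·t + (R/4)·( 1 + (κ/n)·t + ( (n/2)·(n(n−1)/2)·σ )²·t² ) > 0. -/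
/-!
As a function of `t`, the expression to be made positive is `b * t - c * (1 + s ^ 2 * t ^ 2)` up to
the factor `1 / (4 * n)`, with `c = -n * R`. For `s > 0` and `c ≥ 0`, its sign at the best `t` is
governed by the minimum `2 * s` of `(1 + s ^ 2 * t ^ 2) / t` over `t > 0`, attained at `t = 1 / s`,
which gives the criterion `2 * c * s < b`; for `s = 0` the linear term wins as soon as `t` is large.
-/

theorem exists_pos_mul_one_add_sq_mul_sq_lt {b c s : ℝ} (hs : 0 ≤ s) (h : 2 * c * s < b) :
    ∃ t : ℝ, 0 < t ∧ c * (1 + s ^ 2 * t ^ 2) < b * t := by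
  rcases hs.eq_or_lt with rfl | hs_pos
  · have hb : 0 < b := by simpa using h
    obtain ⟨t, ht⟩ := exists_gt (max 0 (c / b))
    obtain ⟨ht_pos, hct⟩ := max_lt_iff.mp ht
    exact ⟨t, ht_pos, by simpa using (div_lt_iff₀' hb).mp hct⟩
  · refine ⟨1 / s, one_div_pos.mpr hs_pos, ?_⟩
    calc
      c * (1 + s ^ 2 * (1 / s) ^ 2) = 2 * c * s * (1 / s) := by field_simp; ring
      _ < b * (1 / s) := by gcongr

/-- On a manifold, `A` is `(n + 2) / (n - 2) * ρ ^ 2 + R ^ 2 / (n * (n - 1))` and `s` is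
`n / 2 * (n * (n - 1) / 2) * σ`, so that `2 * n * s` is `n ^ 2 * (n * (n - 1) / 2) * σ`;
the factor `-R` is `|R|` for nonpositive scalar curvature. -/
theorem no_harmonic_spinors_condition_general {n s A ν₀ κ R : ℝ} (hn : 0 < n) (hs : 0 ≤ s)
    (h : -R * (κ + 2 * n * s) < A + 4 * n * ν₀) :
    ∃ t : ℝ, 0 < t ∧
      0 < t / (4 * n) * A + ν₀ * t + R / 4 * (1 + κ / n * t + s ^ 2 * t ^ 2) := by
  have hcoeff : 2 * (-R * n) * s < A + 4 * n * ν₀ + R * κ := by linarith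
  obtain ⟨t, ht, hlt⟩ := exists_pos_mul_one_add_sq_mul_sq_lt hs hcoeff
  refine ⟨t, ht, ?_⟩
  calc
    0 < ((A + 4 * n * ν₀ + R * κ) * t - -R * n * (1 + s ^ 2 * t ^ 2)) / (4 * n) :=
      div_pos (sub_pos.mpr hlt) (by positivity)
    _ = t / (4 * n) * A + ν₀ * t + R / 4 * (1 + κ / n * t + s ^ 2 * t ^ 2) := by
      field_simp
      ring

theorem no_harmonic_spinors_condition (n : ℕ) (hn : 4 ≤ n)
    (ρ ν₀ σ κ R : ℝ) (hρ : 0 ≤ ρ) (hν : 0 ≤ ν₀) (hσ : 0 ≤ σ) (hR : R ≤ 0)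
    (h : ((n : ℝ) + 2) / ((n : ℝ) - 2) * ρ ^ 2 + R ^ 2 / ((n : ℝ) * ((n : ℝ) - 1))
        + 4 * n * ν₀
      > |R| * (κ + (n : ℝ) ^ 2 * ((n : ℝ) * ((n : ℝ) - 1) / 2) * σ)) :
    ∃ t : ℝ, 0 < t ∧
      t / (4 * n) * (((n : ℝ) + 2) / ((n : ℝ) - 2) * ρ ^ 2
          + R ^ 2 / ((n : ℝ) * ((n : ℝ) - 1)))
        + ν₀ * t
        + R / 4 * (1 + κ / n * t
          + ((n : ℝ) / 2 * ((n : ℝ) * ((n : ℝ) - 1) / 2) * σ) ^ 2 * t ^ 2) > 0 := by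
  have hn_sub : (0 : ℝ) ≤ n - 1 := sub_nonneg.mpr (by exact_mod_cast (by lia : 1 ≤ n))
  rw [abs_of_nonpos hR] at h
  exact no_harmonic_spinors_condition_general (by linarith) (by positivity) (by linarith)
end

section
/- Let n ≥ 4 be a natural number, let Q be the quadratic form Q(x) = −Σᵢ xᵢ² on ℝⁿ (equivalently on EuclideanSpace ℝ (Fin n)), and in the Clifford algebra CliffordAlgebra Q write e i for the image of the i-th standard basis vector, so that (e i)² = −1 and e i · e j = −e j · e i for i ≠ j. Let W : Fin n → Fin n → Fin n → Fin n → ℝ be antisymmetric in its first two arguments (W i j k l = −W j i k l) and in its last two arguments (W i j k l = −W i j l k), and symmetric under interchange of the two pairs (W i j k l = W k l i j). Define H := −(1/16)·Σ_{k,l,α,β,γ,δ ∈ Fin n} (W k l α β)·(W k l γ δ) · e α · e β · e γ · e δ ∈ CliffordAlgebra Q, and |W|² := Σ_{k,l,α,β} (W k l α β)². Then H = (1/8)·|W|²·1 + H₄, where H₄ := −(1/2)·Σ_{k,l ∈ Fin n} Σ_{α<β<γ<δ} ( (W k l α β)·(W k l γ δ) − (W k l α γ)·(W k l β δ) + (W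 k l α δ)·(W k l β γ) ) · e α · e β · e γ · e δ. -/
/-- The image of the `i`-th standard basis vector in the Clifford algebra of `Q`. -/
noncomputable def cliffordBasis {n : ℕ} (Q : QuadraticForm ℝ (Fin n → ℝ)) (i : Fin n) :
    CliffordAlgebra Q :=
  CliffordAlgebra.ι Q (Pi.single i 1)

/-!
For alternating `A`, the sum of all `A i j • (e i * e j)` is twice the bivector `B` formed from the
pairs `i < j`, so that the quadruple sum is `4 • B²`. Splitting off the first generator gives
`B = e₀ v + C`, where `e₀` anticommutes with the vector `v` and commutes with the bivector `C`,
hence `B² = -e₀² v² + e₀ (v C + C v) + C²`. Here `v²` is a scalar and the anticommutator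
`v C + C v` is purely of degree three. By induction `B²` has only components of degrees zero and
four; this is why the degree-two part of the curvature endomorphism vanishes.
-/

section CliffordFamily

open Finset

variable {K R : Type*} [CommRing K] [Ring R] [Algebra K R] {n : ℕ}

/-- A family `e` of pairwise anticommuting elements of an algebra with scalar squares `q`, such as
the image in a Clifford algebra of an orthogonal basis on which the quadratic form has values `q`.
The algebra need not be the Clifford algebra itself. -/
structure IsCliffordFamily {ι : Type*} (q : ι → K) (e : ι → R) : Prop where
  mul_self : ∀ i, e i * e i = q i • (1 : R)
  anticomm : ∀ i j, i ≠ j → e i * e j = -(e j * e i)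

/-- The Clifford element of degree one with components `v`. -/
def cliffordVector (e : Fin n → R) (v : Fin n → K) : R :=
  ∑ i, v i • e i

/-- The Clifford element of degree two with components `A`; only the components with increasing
indices enter. -/
def cliffordBivector (e : Fin n → R) (A : Fin n → Fin n → K) : R :=
  ∑ i, ∑ j ∈ Ioi i, A i j • (e i * e j)

/-- The Clifford element of degree three with components `T`; only the components with increasing
indices enter. -/
def cliffordTrivector (e : Fin n → R) (T : Fin n → Fin n → Fin n → K) : R :=
  ∑ i, ∑ j ∈ Ioi i, ∑ k ∈ Ioi j, T i j k • (e i * e j * e k)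

/-- The Clifford element of degree four with components `T`; only the components with increasing
indices enter. -/
def cliffordQuadrivector (e : Fin n → R) (T : Fin n → Fin n → Fin n → Fin n → K) : R :=
  ∑ i, ∑ j ∈ Ioi i, ∑ k ∈ Ioi j, ∑ l ∈ Ioi k, T i j k l • (e i * e j * e k * e l)

theorem cliffordVector_succ (e : Fin (n + 1) → R) (v : Fin (n + 1) → K) :
    cliffordVector e v = v 0 • e 0 + cliffordVector (Fin.tail e) (Fin.tail v) :=
  Fin.sum_univ_succ _

theorem cliffordBivector_succ (e : Fin (n + 1) → R) (A : Fin (n + 1) → Fin (n + 1) → K) :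
    cliffordBivector e A = e 0 * cliffordVector (Fin.tail e) (Fin.tail (A 0)) +
      cliffordBivector (Fin.tail e) (fun i j => A i.succ j.succ) := by
  simp only [cliffordBivector, cliffordVector, Fin.tail, Fin.sum_univ_succ, Fin.sum_Ioi_zero,
    Fin.sum_Ioi_succ, mul_sum, mul_smul_comm]

theorem cliffordTrivector_succ (e : Fin (n + 1) → R)
    (T : Fin (n + 1) → Fin (n + 1) → Fin (n + 1) → K) :
    cliffordTrivector e T =
      e 0 * cliffordBivector (Fin.tail e) (fun i j => T 0 i.succ j.succ) +
        cliffordTrivector (Fin.tail e) (fun i j k => T i.succ j.succ k.succ) := by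
  simp only [cliffordTrivector, cliffordBivector, Fin.tail, Fin.sum_univ_succ, Fin.sum_Ioi_zero,
    Fin.sum_Ioi_succ, mul_sum, mul_smul_comm, mul_assoc]

theorem cliffordQuadrivector_succ (e : Fin (n + 1) → R)
    (T : Fin (n + 1) → Fin (n + 1) → Fin (n + 1) → Fin (n + 1) → K) :
    cliffordQuadrivector e T =
      e 0 * cliffordTrivector (Fin.tail e) (fun i j k => T 0 i.succ j.succ k.succ) +
        cliffordQuadrivector (Fin.tail e) (fun i j k l => T i.succ j.succ k.succ l.succ) := by
  simp only [cliffordQuadrivector, cliffordTrivector, Fin.tail, Fin.sum_univ_succ,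
    Fin.sum_Ioi_zero, Fin.sum_Ioi_succ, mul_sum, mul_smul_comm, mul_assoc]

theorem cliffordBivector_add (e : Fin n → R) (A B : Fin n → Fin n → K) :
    cliffordBivector e (A + B) = cliffordBivector e A + cliffordBivector e B := by
  simp only [cliffordBivector, Pi.add_apply, add_smul, sum_add_distrib]

theorem cliffordBivector_smul (e : Fin n → R) (c : K) (A : Fin n → Fin n → K) :
    cliffordBivector e (c • A) = c • cliffordBivector e A := by
  simp only [cliffordBivector, Pi.smul_apply, smul_assoc, smul_sum]

theorem cliffordVector_mul_of_anticomm {e : Fin n → R} {x : R}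
    (hx : ∀ i, e i * x = -(x * e i)) (v : Fin n → K) :
    cliffordVector e v * x = -(x * cliffordVector e v) := by
  simp only [cliffordVector, sum_mul, mul_sum, smul_mul_assoc, mul_smul_comm, hx, smul_neg,
    sum_neg_distrib]

theorem cliffordBivector_mul_of_anticomm {e : Fin n → R} {x : R}
    (hx : ∀ i, e i * x = -(x * e i)) (A : Fin n → Fin n → K) :
    cliffordBivector e A * x = x * cliffordBivector e A := by
  have hcomm (i j : Fin n) : e i * e j * x = x * (e i * e j) := by
    rw [mul_assoc, hx j, mul_neg, ← mul_assoc, hx i, neg_mul, neg_neg, mul_assoc]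
  simp only [cliffordBivector, sum_mul, mul_sum, smul_mul_assoc, mul_smul_comm, hcomm]

/-- The components of the wedge product of two vectors. -/
def vectorWedge (u v : Fin n → K) (i j : Fin n) : K :=
  u i * v j - u j * v i

/-- The components with increasing indices of the wedge product of a vector and a bivector. -/
def vectorWedgeBivector (v : Fin n → K) (A : Fin n → Fin n → K) (i j k : Fin n) : K :=
  v i * A j k - v j * A i k + v k * A i j

/-- The components of half the wedge square of a bivector with components `A`. For increasing
indices this is the Pfaffian of the principal `4 × 4` submatrix of `A` on these indices. -/
def pfaffianComponents (A : Fin n → Fin n → K) (i j k l : Fin n) : K :=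
  A i j * A k l - A i k * A j l + A i l * A j k

namespace IsCliffordFamily

theorem tail {q : Fin (n + 1) → K} {e : Fin (n + 1) → R} (he : IsCliffordFamily q e) :
    IsCliffordFamily (Fin.tail q) (Fin.tail e) where
  mul_self i := he.mul_self i.succ
  anticomm i j hij := he.anticomm i.succ j.succ ((Fin.succ_injective n).ne hij)

theorem tail_mul_zero {q : Fin (n + 1) → K} {e : Fin (n + 1) → R} (he : IsCliffordFamily q e)
    (i : Fin n) : Fin.tail e i * e 0 = -(e 0 * Fin.tail e i) :=
  he.anticomm i.succ 0 (Fin.succ_ne_zero i)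

theorem vector_mul_vector {q : Fin n → K} {e : Fin n → R} (he : IsCliffordFamily q e)
    (u v : Fin n → K) :
    cliffordVector e u * cliffordVector e v =
      (∑ i, u i * v i * q i) • (1 : R) + cliffordBivector e (vectorWedge u v) := by
  induction n with
  | zero => simp [cliffordVector, cliffordBivector]
  | succ n ih =>
    have hwedge : cliffordVector (Fin.tail e) (Fin.tail (vectorWedge u v 0)) =
        u 0 • cliffordVector (Fin.tail e) (Fin.tail v) -
          v 0 • cliffordVector (Fin.tail e) (Fin.tail u) := by
      simp only [cliffordVector, vectorWedge, Fin.tail, smul_sum, ← sum_sub_distrib, smul_smul,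
        ← sub_smul, mul_comm]
    have htail : cliffordVector (Fin.tail e) (Fin.tail u) *
          cliffordVector (Fin.tail e) (Fin.tail v) =
        (∑ i : Fin n, u i.succ * v i.succ * q i.succ) • (1 : R) +
          cliffordBivector (Fin.tail e) (fun i j => vectorWedge u v i.succ j.succ) :=
      ih he.tail _ _
    rw [cliffordBivector_succ, hwedge, cliffordVector_succ e u, cliffordVector_succ e v,
      Fin.sum_univ_succ]
    simp only [add_mul, mul_add, mul_sub, smul_mul_assoc, mul_smul_comm, he.mul_self 0,
      cliffordVector_mul_of_anticomm he.tail_mul_zero, htail]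
    module

theorem vector_mul_self {q : Fin n → K} {e : Fin n → R} (he : IsCliffordFamily q e)
    (v : Fin n → K) :
    cliffordVector e v * cliffordVector e v = (∑ i, v i ^ 2 * q i) • (1 : R) := by
  simp [he.vector_mul_vector, cliffordBivector, vectorWedge, mul_comm, sq]

theorem zero_mul_tail_vector_mul_self {q : Fin (n + 1) → K} {e : Fin (n + 1) → R}
    (he : IsCliffordFamily q e) (v : Fin n → K) :
    e 0 * cliffordVector (Fin.tail e) v * (e 0 * cliffordVector (Fin.tail e) v) =
      -(∑ i, v i ^ 2 * (q 0 * q i.succ)) • (1 : R) := by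
  set x := cliffordVector (Fin.tail e) v
  have hx : x * e 0 = -(e 0 * x) := cliffordVector_mul_of_anticomm he.tail_mul_zero v
  calc e 0 * x * (e 0 * x) = -(e 0 * e 0 * (x * x)) := by
        rw [mul_assoc, ← mul_assoc x, hx, neg_mul, mul_neg, mul_assoc, mul_assoc]
    _ = -(q 0 * ∑ i, v i ^ 2 * q i.succ) • (1 : R) := by
        rw [he.mul_self, he.tail.vector_mul_self, smul_mul_smul_comm, mul_one, neg_smul]
        rfl
    _ = -(∑ i, v i ^ 2 * (q 0 * q i.succ)) • (1 : R) := by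
        simp only [mul_sum, mul_left_comm (q 0)]

theorem vector_mul_vector_sub_swap {q : Fin n → K} {e : Fin n → R} (he : IsCliffordFamily q e)
    (u v : Fin n → K) :
    cliffordVector e u * cliffordVector e v - cliffordVector e v * cliffordVector e u =
      (2 : K) • cliffordBivector e (vectorWedge u v) := by
  have hswap : vectorWedge v u = (-1 : K) • vectorWedge u v := by
    ext i j
    simp only [vectorWedge, Pi.smul_apply, smul_eq_mul]
    ring
  have hscalar : ∑ i, v i * u i * q i = ∑ i, u i * v i * q i := by
    simp only [mul_comm (v _)]
  rw [he.vector_mul_vector u v, he.vector_mul_vector v u, hswap, cliffordBivector_smul, hscalar]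
  module

theorem vector_mul_bivector_add_swap {q : Fin n → K} {e : Fin n → R}
    (he : IsCliffordFamily q e) (v : Fin n → K) (A : Fin n → Fin n → K) :
    cliffordVector e v * cliffordBivector e A + cliffordBivector e A * cliffordVector e v =
      (2 : K) • cliffordTrivector e (vectorWedgeBivector v A) := by
  induction n with
  | zero => simp [cliffordVector, cliffordBivector, cliffordTrivector]
  | succ n ih =>
    set u' := cliffordVector (Fin.tail e) (Fin.tail (A 0)) with hu'
    set v' := cliffordVector (Fin.tail e) (Fin.tail v) with hv'
    set B' := cliffordBivector (Fin.tail e) (fun i j => A i.succ j.succ) with hB'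
    have hwedge :
        (fun i j : Fin n => vectorWedgeBivector v A 0 i.succ j.succ) =
          v 0 • (fun i j : Fin n => A i.succ j.succ) +
            vectorWedge (Fin.tail (A 0)) (Fin.tail v) := by
      ext i j
      simp only [vectorWedgeBivector, vectorWedge, Fin.tail, Pi.add_apply, Pi.smul_apply,
        smul_eq_mul]
      ring
    have htrivector : (2 : K) • cliffordTrivector e (vectorWedgeBivector v A) =
        e 0 * ((2 * v 0) • B' + (u' * v' - v' * u')) + (v' * B' + B' * v') := by
      rw [cliffordTrivector_succ, hwedge, cliffordBivector_add, cliffordBivector_smul,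
        he.tail.vector_mul_vector_sub_swap, ih he.tail]
      simp only [mul_add, mul_smul_comm, smul_add, smul_smul]
      rfl
    have hu : u' * e 0 = -(e 0 * u') := cliffordVector_mul_of_anticomm he.tail_mul_zero _
    have hv : v' * e 0 = -(e 0 * v') := cliffordVector_mul_of_anticomm he.tail_mul_zero _
    have hB : B' * e 0 = e 0 * B' := cliffordBivector_mul_of_anticomm he.tail_mul_zero _
    rw [htrivector, cliffordVector_succ e v, cliffordBivector_succ e A, ← hu', ← hv', ← hB']
    simp only [add_mul, mul_add, mul_sub, smul_mul_assoc, mul_smul_comm, ← mul_assoc, hv, hB]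
    simp only [mul_assoc, hu, mul_neg, neg_mul]
    module

theorem bivector_mul_self {q : Fin n → K} {e : Fin n → R} (he : IsCliffordFamily q e)
    (A : Fin n → Fin n → K) :
    cliffordBivector e A * cliffordBivector e A =
      -(∑ i, ∑ j ∈ Ioi i, A i j ^ 2 * (q i * q j)) • (1 : R) +
        (2 : K) • cliffordQuadrivector e (pfaffianComponents A) := by
  induction n with
  | zero => simp [cliffordBivector, cliffordQuadrivector]
  | succ n ih =>
    set v := cliffordVector (Fin.tail e) (Fin.tail (A 0)) with hv
    set B' := cliffordBivector (Fin.tail e) (fun i j => A i.succ j.succ) with hB'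
    have hquadrivector : (2 : K) • cliffordQuadrivector e (pfaffianComponents A) =
        e 0 * (v * B' + B' * v) + (2 : K) • cliffordQuadrivector (Fin.tail e)
          (pfaffianComponents fun i j => A i.succ j.succ) := by
      rw [he.tail.vector_mul_bivector_add_swap, cliffordQuadrivector_succ, smul_add,
        mul_smul_comm]
      rfl
    have hB0 : B' * e 0 = e 0 * B' := cliffordBivector_mul_of_anticomm he.tail_mul_zero _
    rw [hquadrivector, cliffordBivector_succ e A, ← hv, ← hB', Fin.sum_univ_succ,
      Fin.sum_Ioi_zero]
    simp only [Fin.sum_Ioi_succ]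
    calc (e 0 * v + B') * (e 0 * v + B')
        = (e 0 * v) * (e 0 * v) + e 0 * (v * B' + B' * v) + B' * B' := by
          simp only [add_mul, mul_add, ← mul_assoc, hB0]
          abel
      _ = _ := by
          rw [he.zero_mul_tail_vector_mul_self, ih he.tail]
          simp only [Fin.tail]
          module

end IsCliffordFamily

theorem sum_sum_eq_two_nsmul_sum_sum_Ioi {ι M : Type*} [Fintype ι] [LinearOrder ι]
    [LocallyFiniteOrderTop ι] [LocallyFiniteOrderBot ι] [AddCommMonoid M] {f : ι → ι → M}
    (hsymm : ∀ i j, f i j = f j i) (hdiag : ∀ i, f i i = 0) :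
    ∑ i, ∑ j, f i j = 2 • ∑ i, ∑ j ∈ Ioi i, f i j := by
  calc ∑ i, ∑ j, f i j = ∑ i, ∑ j ∈ {i}ᶜ, f j i := by
        refine sum_congr rfl fun i _ => ?_
        rw [Fintype.sum_eq_add_sum_compl i, hdiag, zero_add]
        exact sum_congr rfl fun j _ => hsymm i j
    _ = ∑ i, ∑ j ∈ Ioi i, (f j i + f i j) := (sum_sum_Ioi_add_eq_sum_sum_off_diag f).symm
    _ = 2 • ∑ i, ∑ j ∈ Ioi i, f i j := by
        simp only [hsymm, ← two_nsmul, smul_sum]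

theorem IsCliffordFamily.sum_sum_eq_two_smul_bivector {q : Fin n → K} {e : Fin n → R}
    (he : IsCliffordFamily q e) {A : Fin n → Fin n → K} (hA : ∀ i j, A i j = -A j i)
    (hdiag : ∀ i, A i i = 0) :
    ∑ i, ∑ j, A i j • (e i * e j) = (2 : K) • cliffordBivector e A := by
  rw [ofNat_smul_eq_nsmul]
  refine sum_sum_eq_two_nsmul_sum_sum_Ioi (fun i j => ?_) fun i => by rw [hdiag, zero_smul]
  obtain rfl | hij := eq_or_ne i j
  · rfl
  · rw [hA i j, he.anticomm i j hij, neg_smul_neg]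

theorem IsCliffordFamily.sum_smul_mul_mul_mul {q : Fin n → K} {e : Fin n → R}
    (he : IsCliffordFamily q e) {A : Fin n → Fin n → K} (hA : ∀ i j, A i j = -A j i)
    (hdiag : ∀ i, A i i = 0) :
    ∑ i, ∑ j, ∑ k, ∑ l, (A i j * A k l) • (e i * e j * e k * e l) =
      (-2 * ∑ i, ∑ j, A i j ^ 2 * (q i * q j)) • (1 : R) +
        (8 : K) • cliffordQuadrivector e (pfaffianComponents A) := by
  have hnorm : ∑ i, ∑ j, A i j ^ 2 * (q i * q j) =
      2 * ∑ i, ∑ j ∈ Ioi i, A i j ^ 2 * (q i * q j) := by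
    rw [sum_sum_eq_two_nsmul_sum_sum_Ioi (fun i j => by rw [hA i j, neg_sq, mul_comm (q i)])
      fun i => by simp [hdiag], two_nsmul, two_mul]
  calc ∑ i, ∑ j, ∑ k, ∑ l, (A i j * A k l) • (e i * e j * e k * e l)
      = (∑ i, ∑ j, A i j • (e i * e j)) * ∑ k, ∑ l, A k l • (e k * e l) := by
        simp only [sum_mul]
        simp only [mul_sum, smul_mul_smul_comm, mul_assoc]
    _ = _ := by
        rw [he.sum_sum_eq_two_smul_bivector hA hdiag, smul_mul_smul_comm, he.bivector_mul_self,
          hnorm]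
        module

end CliffordFamily

theorem isCliffordFamily_cliffordBasis {n : ℕ} {Q : QuadraticForm ℝ (Fin n → ℝ)} {q : Fin n → ℝ}
    (hQ : ∀ x, Q x = ∑ i, q i * x i ^ 2) : IsCliffordFamily q (cliffordBasis Q) where
  mul_self i := by
    rw [cliffordBasis, CliffordAlgebra.ι_sq_scalar, Algebra.algebraMap_eq_smul_one, hQ]
    simp [Pi.single_apply]
  anticomm i j hij := by
    have hortho : Q.IsOrtho (Pi.single i 1) (Pi.single j 1) := by
      have hprod (k : Fin n) :
          (Pi.single i 1 : Fin n → ℝ) k * (Pi.single j 1 : Fin n → ℝ) k = 0 := by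
        obtain rfl | hki := eq_or_ne k i
        · rw [Pi.single_eq_of_ne hij, mul_zero]
        · rw [Pi.single_eq_of_ne hki, zero_mul]
      rw [QuadraticMap.isOrtho_def]
      simp only [hQ, Pi.add_apply, ← Finset.sum_add_distrib]
      exact Finset.sum_congr rfl fun k _ => by linear_combination 2 * q k * hprod k
    exact CliffordAlgebra.ι_mul_ι_comm_of_isOrtho hortho

theorem weyl_endomorphism_decomposition_general {K R κ : Type*} [Field K] [NeZero (2 : K)]
    [Ring R] [Algebra K R] [Fintype κ] {n : ℕ} {q : Fin n → K} {e : Fin n → R}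
    (he : IsCliffordFamily q e) (W : κ → Fin n → Fin n → K)
    (hW : ∀ k α β, W k α β = -W k β α) :
    (-(1 / 16 : K)) • (∑ k, ∑ α, ∑ β, ∑ γ, ∑ δ,
        (W k α β * W k γ δ) • (e α * e β * e γ * e δ)) =
      ((1 / 8 : K) * ∑ k, ∑ α, ∑ β, W k α β ^ 2 * (q α * q β)) • (1 : R) +
        (-(1 / 2 : K)) • (∑ k, ∑ α, ∑ β ∈ Finset.Ioi α, ∑ γ ∈ Finset.Ioi β, ∑ δ ∈ Finset.Ioi γ,
          (W k α β * W k γ δ - W k α γ * W k β δ + W k α δ * W k β γ) •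
            (e α * e β * e γ * e δ)) := by
  have two_ne : (2 : K) ≠ 0 := two_ne_zero
  have eight_ne : (8 : K) ≠ 0 := by
    simpa only [show (2 : K) ^ 3 = 8 by norm_num] using pow_ne_zero 3 two_ne
  have hscalar : -(1 / 16 : K) * -2 = 1 / 8 := by
    rw [show (16 : K) = 2 * 8 by norm_num]
    field_simp
  have hquadri : -(1 / 16 : K) * 8 = -(1 / 2) := by
    rw [show (16 : K) = 2 * 8 by norm_num]
    field_simp
  have hdiag (k : κ) (α : Fin n) : W k α α = 0 := by
    refine (mul_eq_zero.mp ?_).resolve_left two_ne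
    linear_combination hW k α α
  simp only [fun k => he.sum_smul_mul_mul_mul (hW k) (hdiag k), Finset.sum_add_distrib,
    ← Finset.sum_smul, ← Finset.smul_sum, ← Finset.mul_sum, smul_add, smul_smul, ← mul_assoc,
    hscalar, hquadri]
  rfl

theorem weyl_endomorphism_decomposition (n : ℕ) (hn : 4 ≤ n)
    (Q : QuadraticForm ℝ (Fin n → ℝ)) (hQ : ∀ x, Q x = -∑ i, x i ^ 2)
    (W : Fin n → Fin n → Fin n → Fin n → ℝ)
    (h1 : ∀ i j k l, W i j k l = -W j i k l)
    (h2 : ∀ i j k l, W i j k l = -W i j l k)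
    (h3 : ∀ i j k l, W i j k l = W k l i j) :
    (-(1 / 16 : ℝ)) • (∑ k, ∑ l, ∑ α, ∑ β, ∑ γ, ∑ δ,
        (W k l α β * W k l γ δ) •
          (cliffordBasis Q α * cliffordBasis Q β * cliffordBasis Q γ * cliffordBasis Q δ))
      = ((1 / 8 : ℝ) * ∑ k, ∑ l, ∑ α, ∑ β, (W k l α β) ^ 2) • (1 : CliffordAlgebra Q)
        + (-(1 / 2 : ℝ)) • (∑ k, ∑ l, ∑ α, ∑ β ∈ Finset.Ioi α, ∑ γ ∈ Finset.Ioi β,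
            ∑ δ ∈ Finset.Ioi γ,
            (W k l α β * W k l γ δ - W k l α γ * W k l β δ + W k l α δ * W k l β γ) •
              (cliffordBasis Q α * cliffordBasis Q β * cliffordBasis Q γ *
                cliffordBasis Q δ)) := by
  simpa only [Fintype.sum_prod_type, neg_mul_neg, mul_one] using
    weyl_endomorphism_decomposition_general
      (isCliffordFamily_cliffordBasis (q := fun _ => -1) (by simpa using hQ))
      (fun p : Fin n × Fin n => W p.1 p.2) fun p => h2 p.1 p.2
end

section
/- Let n ≥ 4 be a natural number, let Q be the quadratic form Q(x) = −Σᵢ xᵢ² on ℝⁿ, and in the Clifford algebra CliffordAlgebra Q write e i for the image of the i-th standard basis vector, so that (e i)² = −1 and e i · e j = −e j · e i for i ≠ j. Let W : Fin n → Fin n → Fin n → Fin n → ℝ be antisymmetric in its first two arguments and in its last two arguments and symmetric under interchange of the two pairs. Suppose that for all α, β, γ, δ ∈ Fin n: Σ_{k,l} ( (W k l α β)·(W k l γ δ) + (W k l α γ)·(W k l δ β) + (W k l α δ)·(W k l β γ) ) = 0. Then H := −(1/16)·Σ_{k,l,α,β,γ,δ} (W k l α β)·(W k l γ δ) · e α ·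 e β · e γ · e δ equals the scalar (1/8)·( Σ_{k,l,α,β} (W k l α β)² )·1 in CliffordAlgebra Q. -/
/-!
The quadratic relation says exactly that the contraction `T a b c d = ∑ p, W p a b * W p c d`
satisfies the first Bianchi identity, so `T` has the symmetries of a curvature tensor. As for the
Riemann tensor in the Lichnerowicz formula, adding the three cyclic rearrangements of
`∑ b c d, T a b c d e_b e_c e_d` and reordering the Clifford products leaves only the Ricci
contraction of `T`. Ricci is symmetric, so its Clifford image is the scalar given by the trace.
-/

section Contraction

variable {I J R : Type*} [Fintype J] [CommRing R]

/-- An algebraic curvature tensor, given by its components. Antisymmetry in the first pair of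
indices follows from the first two fields. -/
structure IsAlgebraicCurvatureTensor (T : I → I → I → I → R) : Prop where
  antisymm : ∀ a b c d, T a b c d = -T a b d c
  pair_symm : ∀ a b c d, T a b c d = T c d a b
  bianchi : ∀ a b c d, T a b c d + T a c d b + T a d b c = 0

/-- The 4-tensor `∑ p, W p ⊗ W p` of a family of 2-tensors. For the Weyl tensor the family is
indexed by the first pair of indices. -/
def sumTensorSelf (W : J → I → I → R) (a b c d : I) : R :=
  ∑ p, W p a b * W p c d

theorem isAlgebraicCurvatureTensor_sumTensorSelf {W : J → I → I → R}
    (hW : ∀ p a b, W p a b = -W p b a)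
    (hcyclic : ∀ a b c d,
      ∑ p, (W p a b * W p c d + W p a c * W p d b + W p a d * W p b c) = 0) :
    IsAlgebraicCurvatureTensor (sumTensorSelf W) where
  antisymm a b c d := by
    simp only [sumTensorSelf, hW _ c d, mul_neg, Finset.sum_neg_distrib]
  pair_symm a b c d := by
    simp only [sumTensorSelf, mul_comm]
  bianchi a b c d := by
    simpa only [sumTensorSelf, Finset.sum_add_distrib] using hcyclic a b c d

variable [Fintype I]

theorem sum_smul_eq_sum_sumTensorSelf_smul {N : Type*} [AddCommMonoid N] [Module R N]
    (W : J → I → I → R) (f : I → I → I → I → N) :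
    ∑ p, ∑ a, ∑ b, ∑ c, ∑ d, (W p a b * W p c d) • f a b c d =
      ∑ a, ∑ b, ∑ c, ∑ d, sumTensorSelf W a b c d • f a b c d := by
  rw [← Finset.sum_comm_cycle]
  refine Finset.sum_congr rfl fun a _ => Finset.sum_congr rfl fun b _ => ?_
  rw [← Finset.sum_comm_cycle]
  simp only [sumTensorSelf, Finset.sum_smul]

theorem sum_mul_eq_zero_of_antisymm_of_symm (h2 : IsUnit (2 : R)) {s g : I → I → R}
    (hs : ∀ i j, s i j = -s j i) (hg : ∀ i j, g i j = g j i) :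
    ∑ i, ∑ j, s i j * g i j = 0 := by
  have sum_eq_neg_sum : ∑ i, ∑ j, s i j * g i j = -∑ i, ∑ j, s i j * g i j := calc
    ∑ i, ∑ j, s i j * g i j = ∑ i, ∑ j, s j i * g j i := Finset.sum_comm
    _ = ∑ i, ∑ j, -(s i j * g i j) :=
      Finset.sum_congr rfl fun i _ => Finset.sum_congr rfl fun j _ => by
        rw [hs j i, hg j i, neg_mul]
    _ = -∑ i, ∑ j, s i j * g i j := by simp only [Finset.sum_neg_distrib]
  rw [← h2.mul_right_eq_zero, two_mul]
  exact eq_neg_iff_add_eq_zero.mp sum_eq_neg_sum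

theorem sum_smul_cyclic {N : Type*} [AddCommMonoid N] [Module R N] (t : I → I → I → R)
    (f : I → I → I → N) :
    ∑ b, ∑ c, ∑ d, t b c d • (f b c d + f d b c + f c d b) =
      ∑ b, ∑ c, ∑ d, (t b c d + t c d b + t d b c) • f b c d := by
  simp only [smul_add, add_smul, Finset.sum_add_distrib]
  rw [Finset.sum_comm_cycle (f := fun b c d => t b c d • f d b c),
    Finset.sum_comm_cycle (f := fun b c d => t d b c • f b c d)]

/-- The Ricci contraction of a covariant 4-tensor `T` against `g`, over the second and fourth
indices. No inverse is taken: `g` plays the role of the metric on the dual space. -/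
def ricciContraction (g : I → I → R) (T : I → I → I → I → R) (a c : I) : R :=
  ∑ b, ∑ d, T a b c d * g b d

theorem IsAlgebraicCurvatureTensor.ricciContraction_symm {T : I → I → I → I → R}
    (hT : IsAlgebraicCurvatureTensor T) {g : I → I → R} (hg : ∀ i j, g i j = g j i) (a c : I) :
    ricciContraction g T a c = ricciContraction g T c a := by
  unfold ricciContraction
  rw [Finset.sum_comm]
  refine Finset.sum_congr rfl fun b _ => Finset.sum_congr rfl fun d _ => ?_
  rw [hT.pair_symm, hg]

end Contraction

section Clifford

open CliffordAlgebra (ι)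
open QuadraticMap (polar polar_comm)

variable {I R M : Type*} [Fintype I] [CommRing R] [AddCommGroup M] [Module R M]
  {Q : QuadraticForm R M}

theorem ι_mul_ι_mul_ι_rotate (x y z : M) :
    ι Q x * ι Q y * ι Q z = ι Q y * ι Q z * ι Q x + polar Q x y • ι Q z - polar Q x z • ι Q y := by
  rw [CliffordAlgebra.ι_mul_ι_comm x y, sub_mul, mul_assoc (ι Q y),
    CliffordAlgebra.ι_mul_ι_comm x z, mul_sub, ← Algebra.commutes, ← Algebra.smul_def,
    ← Algebra.smul_def, mul_assoc]
  abel

theorem two_smul_sum_smul_ι_mul_ι_of_symm (v : I → M) {s : I → I → R}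
    (hs : ∀ i j, s i j = s j i) :
    (2 : R) • ∑ i, ∑ j, s i j • (ι Q (v i) * ι Q (v j)) =
      (∑ i, ∑ j, s i j * polar Q (v i) (v j)) • (1 : CliffordAlgebra Q) := by
  have swap : ∑ i, ∑ j, s i j • (ι Q (v i) * ι Q (v j)) =
      ∑ i, ∑ j, s i j • (ι Q (v j) * ι Q (v i)) := by
    rw [Finset.sum_comm]
    simp only [hs]
  rw [two_smul]
  nth_rw 2 [swap]
  simp only [← Finset.sum_add_distrib, ← smul_add, CliffordAlgebra.ι_mul_ι_add_swap,
    Algebra.algebraMap_eq_smul_one, smul_smul, Finset.sum_smul]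

theorem ι_mul_ι_mul_ι_cyclic_sum (x y z : M) :
    ι Q x * ι Q y * ι Q z + ι Q z * ι Q x * ι Q y + ι Q y * ι Q z * ι Q x =
      (3 : R) • (ι Q x * ι Q y * ι Q z) + (2 : R) • polar Q x z • ι Q y
        - polar Q x y • ι Q z - polar Q y z • ι Q x := by
  rw [ι_mul_ι_mul_ι_rotate z x y, ι_mul_ι_mul_ι_rotate x y z, polar_comm Q z x, polar_comm Q z y]
  module

theorem sum_smul_ι_mul_ι_mul_ι_of_bianchi (h2 : IsUnit (2 : R)) (h3 : IsUnit (3 : R)) (v : I → M)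
    {t : I → I → I → R} (ht : ∀ b c d, t b c d = -t b d c)
    (hb : ∀ b c d, t b c d + t c d b + t d b c = 0) :
    ∑ b, ∑ c, ∑ d, t b c d • (ι Q (v b) * ι Q (v c) * ι Q (v d)) =
      -∑ c, (∑ b, ∑ d, t b c d * polar Q (v b) (v d)) • ι Q (v c) := by
  set S := ∑ b, ∑ c, ∑ d, t b c d • (ι Q (v b) * ι Q (v c) * ι Q (v d)) with hS
  set P := ∑ c, (∑ b, ∑ d, t b c d * polar Q (v b) (v d)) • ι Q (v c) with hP
  have contract_outer :
      ∑ b, ∑ c, ∑ d, (t b c d * polar Q (v b) (v d)) • ι Q (v c) = P := by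
    rw [hP, Finset.sum_comm]
    simp only [Finset.sum_smul]
  have contract_left :
      ∑ b, ∑ c, ∑ d, (t b c d * polar Q (v b) (v c)) • ι Q (v d) = -P := by
    rw [← contract_outer, ← Finset.sum_neg_distrib]
    refine Finset.sum_congr rfl fun b _ => ?_
    rw [Finset.sum_comm]
    simp only [← Finset.sum_neg_distrib, ← neg_smul, ← neg_mul, ← ht]
  have contract_right :
      ∑ b, ∑ c, ∑ d, (t b c d * polar Q (v c) (v d)) • ι Q (v b) = 0 := by
    simp only [← Finset.sum_smul]
    refine Finset.sum_eq_zero fun b _ => ?_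
    rw [sum_mul_eq_zero_of_antisymm_of_symm h2 (ht b) fun c d => polar_comm Q (v c) (v d),
      zero_smul]
  have three_smul_sum : (3 : R) • (S + P) = 0 := calc
    (3 : R) • (S + P) = (3 : R) • S + (2 : R) • P - -P - 0 := by module
    _ = ∑ b, ∑ c, ∑ d, t b c d • (ι Q (v b) * ι Q (v c) * ι Q (v d)
          + ι Q (v d) * ι Q (v b) * ι Q (v c) + ι Q (v c) * ι Q (v d) * ι Q (v b)) := by
      rw [← contract_left, ← contract_right, ← contract_outer]
      simp only [hS, ι_mul_ι_mul_ι_cyclic_sum, Finset.smul_sum, ← Finset.sum_add_distrib,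
        ← Finset.sum_sub_distrib, smul_add, smul_sub, smul_smul, mul_comm (3 : R),
        mul_left_comm (2 : R)]
    _ = 0 := by
      rw [sum_smul_cyclic t fun b c d => ι Q (v b) * ι Q (v c) * ι Q (v d)]
      simp only [hb, zero_smul, Finset.sum_const_zero]
  rw [h3.smul_eq_zero] at three_smul_sum
  exact eq_neg_of_add_eq_zero_left three_smul_sum

theorem IsAlgebraicCurvatureTensor.two_smul_sum_smul_ι (h2 : IsUnit (2 : R)) (h3 : IsUnit (3 : R))
    {T : I → I → I → I → R} (hT : IsAlgebraicCurvatureTensor T) (v : I → M) :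
    (2 : R) • ∑ a, ∑ b, ∑ c, ∑ d, T a b c d • (ι Q (v a) * ι Q (v b) * ι Q (v c) * ι Q (v d)) =
      -(∑ a, ∑ c, ricciContraction (fun i j => polar Q (v i) (v j)) T a c * polar Q (v a) (v c)) •
        (1 : CliffordAlgebra Q) := by
  set ric := ricciContraction (fun i j => polar Q (v i) (v j)) T with hric
  have ric_symm (a c : I) : ric a c = ric c a :=
    hT.ricciContraction_symm (fun i j => polar_comm Q (v i) (v j)) a c
  have sum_eq_neg_ric :
      ∑ a, ∑ b, ∑ c, ∑ d, T a b c d • (ι Q (v a) * ι Q (v b) * ι Q (v c) * ι Q (v d)) =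
        -∑ a, ∑ c, ric a c • (ι Q (v a) * ι Q (v c)) := by
    rw [← Finset.sum_neg_distrib]
    refine Finset.sum_congr rfl fun a _ => ?_
    have mul_bianchi_sum := congrArg (ι Q (v a) * ·)
      (sum_smul_ι_mul_ι_mul_ι_of_bianchi (Q := Q) h2 h3 v (hT.antisymm a) (hT.bianchi a))
    simpa only [Finset.mul_sum, mul_neg, mul_smul_comm, mul_assoc, hric, ricciContraction]
      using mul_bianchi_sum
  rw [sum_eq_neg_ric, smul_neg, two_smul_sum_smul_ι_mul_ι_of_symm v ric_symm, neg_smul]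

theorem IsAlgebraicCurvatureTensor.sum_smul_ι_of_orthonormal [DecidableEq I] (h2 : IsUnit (2 : R))
    (h3 : IsUnit (3 : R)) {T : I → I → I → I → R} (hT : IsAlgebraicCurvatureTensor T) {v : I → M}
    (hv : ∀ i j, polar Q (v i) (v j) = if i = j then -2 else 0) :
    ∑ a, ∑ b, ∑ c, ∑ d, T a b c d • (ι Q (v a) * ι Q (v b) * ι Q (v c) * ι Q (v d)) =
      (-2 * ∑ a, ∑ b, T a b a b) • (1 : CliffordAlgebra Q) := by
  rw [← h2.smul_left_cancel, hT.two_smul_sum_smul_ι h2 h3, smul_smul]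
  simp only [ricciContraction, hv, mul_ite, mul_zero, Finset.sum_ite_eq, Finset.mem_univ, if_true,
    ← Finset.sum_mul]
  congr 1
  ring

theorem polar_single_single_of_eq_neg_sum_sq [DecidableEq I] {Q : QuadraticForm R (I → R)}
    (hQ : ∀ x, Q x = -∑ i, x i ^ 2) (i j : I) :
    polar Q (Pi.single i 1) (Pi.single j 1) = if i = j then -2 else 0 := by
  have sum_single_mul_single :
      ∑ x, 2 * (Pi.single i 1 : I → R) x * (Pi.single j 1 : I → R) x = if i = j then 2 else 0 := by
    simp [Pi.single_apply, eq_comm]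
  simp only [polar, hQ, Pi.add_apply, add_sq, Finset.sum_add_distrib, sum_single_mul_single]
  split_ifs <;> ring

end Clifford

theorem weyl_endomorphism_scalar_general {I J K M : Type*} [Fintype I] [DecidableEq I] [Fintype J]
    [Field K] [NeZero (2 : K)] [NeZero (3 : K)] [AddCommGroup M] [Module K M]
    (Q : QuadraticForm K M) (v : I → M)
    (hv : ∀ i j, QuadraticMap.polar Q (v i) (v j) = if i = j then -2 else 0)
    (W : J → I → I → K) (hW : ∀ p α β, W p α β = -W p β α)
    (hcyclic : ∀ α β γ δ,
      ∑ p, (W p α β * W p γ δ + W p α γ * W p δ β + W p α δ * W p β γ) = 0) :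
    (-(1 / 16 : K)) • (∑ p, ∑ α, ∑ β, ∑ γ, ∑ δ, (W p α β * W p γ δ) •
        (CliffordAlgebra.ι Q (v α) * CliffordAlgebra.ι Q (v β) *
          CliffordAlgebra.ι Q (v γ) * CliffordAlgebra.ι Q (v δ)))
      = ((1 / 8 : K) * ∑ p, ∑ α, ∑ β, (W p α β) ^ 2) • (1 : CliffordAlgebra Q) := by
  have hT := isAlgebraicCurvatureTensor_sumTensorSelf hW hcyclic
  have trace_eq_sum_sq :
      ∑ α, ∑ β, sumTensorSelf W α β α β = ∑ p, ∑ α, ∑ β, (W p α β) ^ 2 := by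
    simp only [sumTensorSelf, ← sq]
    exact Finset.sum_comm_cycle
  rw [sum_smul_eq_sum_sumTensorSelf_smul,
    hT.sum_smul_ι_of_orthonormal two_ne_zero.isUnit three_ne_zero.isUnit hv, trace_eq_sum_sq,
    smul_smul]
  congr 1
  have h2 : (2 : K) ≠ 0 := two_ne_zero
  have h8 : (8 : K) = 2 ^ 3 := by norm_num
  have h16 : (16 : K) = 2 ^ 4 := by norm_num
  rw [h8, h16]
  field_simp

theorem weyl_endomorphism_scalar (n : ℕ) (hn : 4 ≤ n)
    (Q : QuadraticForm ℝ (Fin n → ℝ)) (hQ : ∀ x, Q x = -∑ i, x i ^ 2)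
    (W : Fin n → Fin n → Fin n → Fin n → ℝ)
    (h1 : ∀ i j k l, W i j k l = -W j i k l)
    (h2 : ∀ i j k l, W i j k l = -W i j l k)
    (h3 : ∀ i j k l, W i j k l = W k l i j)
    (hcyclic : ∀ α β γ δ : Fin n,
      ∑ k, ∑ l, (W k l α β * W k l γ δ + W k l α γ * W k l δ β + W k l α δ * W k l β γ) = 0) :
    (-(1 / 16 : ℝ)) • (∑ k, ∑ l, ∑ α, ∑ β, ∑ γ, ∑ δ,
        (W k l α β * W k l γ δ) •
          (cliffordBasis Q α * cliffordBasis Q β * cliffordBasis Q γ * cliffordBasis Q δ))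
      = ((1 / 8 : ℝ) * ∑ k, ∑ l, ∑ α, ∑ β, (W k l α β) ^ 2) •
          (1 : CliffordAlgebra Q) := by
  simpa only [Fintype.sum_prod_type, cliffordBasis] using
    weyl_endomorphism_scalar_general Q (fun i => Pi.single i 1)
      (polar_single_single_of_eq_neg_sum_sq hQ) (fun p : Fin n × Fin n => W p.1 p.2)
      (fun p => h2 p.1 p.2) (by simpa only [Fintype.sum_prod_type] using hcyclic)
end

section
/- Let n ≥ 4 be a natural number, let Q be the quadratic form Q(x) = −Σᵢ xᵢ² on ℝⁿ, and in the Clifford algebra CliffordAlgebra Q write e i for the image of the i-th standard basis vector. Let W : Fin n → Fin n → Fin n → Fin n → ℝ be antisymmetric in its first two arguments and in its last two arguments, symmetric under interchange of the two pairs, satisfying the first Bianchi identity W i j k l + W i k l j + W i l j k = 0, and totally trace-free: Σ_k W k i k j = 0 for all i, j. Then for every j ∈ Fin n, both Σ_{i,k,m ∈ Fin n} (W i j k m) · e i · e k · e m = 0 and Σ_{i,k,m ∈ Fin n} (W i j k m) · e k · e m · e i = 0 hold in CliffordAlgebra Q. -/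
/-! Summed against `W`, the three cyclic rearrangements of `e i * e k * e m` coincide: anticommuting
two adjacent factors costs only a trace of `W`, which vanishes, and interchanging `k` and `m` costs
a sign. By the first Bianchi identity the three sums add up to zero, so three times each of them
is zero. -/

section AnticommutingProducts

variable {ι R : Type*} [Fintype ι] [CommRing R] {V : ι → ι → ι → R}

theorem sum_smul_cyclic_eq_zero {M : Type*} [AddCommGroup M] [Module R M]
    (hcyclic : ∀ i k m, V i k m + V k m i + V m i k = 0) (F : ι → ι → ι → M) :
    ∑ i, ∑ k, ∑ m, V i k m • F i k m + ∑ i, ∑ k, ∑ m, V i k m • F m i k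
      + ∑ i, ∑ k, ∑ m, V i k m • F k m i = 0 := by
  have rotate (G : ι → ι → ι → M) : ∑ i, ∑ k, ∑ m, G i k m = ∑ i, ∑ k, ∑ m, G k m i :=
    Finset.sum_comm_cycle
  rw [rotate fun i k m => V i k m • F m i k, rotate fun i k m => V i k m • F k m i,
    rotate fun i k m => V k m i • F m i k]
  simp only [← Finset.sum_add_distrib, ← add_smul, hcyclic, zero_smul, Finset.sum_const_zero]

variable {A : Type*} [Ring A] [Algebra R A] {e : ι → A} {b : ι → ι → R}

theorem sum_smul_mul_mul_add_swap_left
    (he : ∀ i k, e i * e k + e k * e i = algebraMap R A (b i k)) :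
    ∑ i, ∑ k, ∑ m, V i k m • (e i * e k * e m) + ∑ i, ∑ k, ∑ m, V i k m • (e k * e i * e m) =
      ∑ m, (∑ i, ∑ k, b i k * V i k m) • e m := by
  simp only [← Finset.sum_add_distrib, ← smul_add, ← add_mul, he, Finset.sum_smul,
    ← Algebra.smul_def, smul_smul, mul_comm (b _ _)]
  exact Finset.sum_comm_cycle

theorem sum_smul_mul_mul_add_swap_right
    (he : ∀ i k, e i * e k + e k * e i = algebraMap R A (b i k)) :
    ∑ i, ∑ k, ∑ m, V i k m • (e k * e i * e m) + ∑ i, ∑ k, ∑ m, V i k m • (e k * e m * e i) =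
      ∑ k, (∑ i, ∑ m, b i m * V i k m) • e k := by
  simp only [← Finset.sum_add_distrib, ← smul_add, mul_assoc, ← mul_add, he, Finset.sum_smul,
    ← Algebra.commutes, ← Algebra.smul_def, smul_smul, mul_comm (b _ _)]
  exact Finset.sum_comm

theorem sum_smul_mul_mul_eq_zero_of_cyclic_of_trace_eq_zero [Invertible (3 : R)]
    (he : ∀ i k, e i * e k + e k * e i = algebraMap R A (b i k))
    (hskew : ∀ i k m, V i k m = -V i m k)
    (hcyclic : ∀ i k m, V i k m + V k m i + V m i k = 0)
    (htrace : ∀ m, ∑ i, ∑ k, b i k * V i k m = 0) :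
    ∑ i, ∑ k, ∑ m, V i k m • (e i * e k * e m) = 0 ∧
      ∑ i, ∑ k, ∑ m, V i k m • (e k * e m * e i) = 0 := by
  have htrace' (k : ι) : ∑ i, ∑ m, b i m * V i k m = 0 := by
    simp only [hskew _ k, mul_neg, Finset.sum_neg_distrib, htrace, neg_zero]
  have left_swap := sum_smul_mul_mul_add_swap_left (V := V) he
  have right_swap := sum_smul_mul_mul_add_swap_right (V := V) he
  simp only [htrace, htrace', zero_smul, Finset.sum_const_zero] at left_swap right_swap
  have skew_swap : ∑ i, ∑ k, ∑ m, V i k m • (e m * e i * e k) =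
      -∑ i, ∑ k, ∑ m, V i k m • (e k * e i * e m) := by
    simp only [← Finset.sum_neg_distrib, ← neg_smul, ← hskew]
    exact Finset.sum_congr rfl fun i _ => Finset.sum_comm
  have bianchi := sum_smul_cyclic_eq_zero hcyclic fun i k m => e i * e k * e m
  set T := ∑ i, ∑ k, ∑ m, V i k m • (e i * e k * e m)
  have rotated_eq : ∑ i, ∑ k, ∑ m, V i k m • (e k * e m * e i) = T :=
    (eq_neg_of_add_eq_zero_right right_swap).trans (eq_neg_of_add_eq_zero_left left_swap).symm
  rw [skew_swap, ← eq_neg_of_add_eq_zero_left left_swap, rotated_eq] at bianchi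
  have three_smul : (3 : R) • T = 0 := by
    rw [← bianchi]
    module
  have T_eq_zero : T = 0 := (isUnit_of_invertible (3 : R)).smul_eq_zero.mp three_smul
  exact ⟨T_eq_zero, rotated_eq.trans T_eq_zero⟩

end AnticommutingProducts

theorem weyl_clifford_contraction_zero_general {ι R M : Type*} [Fintype ι] [CommRing R]
    [Invertible (3 : R)] [AddCommGroup M] [Module R M] (Q : QuadraticForm R M) (v : ι → M)
    {W : ι → ι → ι → ι → R}
    (hskew : ∀ i j k l, W i j k l = -W j i k l)
    (hskew' : ∀ i j k l, W i j k l = -W i j l k)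
    (hBianchi : ∀ i j k l, W i j k l + W i k l j + W i l j k = 0)
    (htrace : ∀ i j, ∑ k, ∑ l, QuadraticMap.polar Q (v k) (v l) * W k i l j = 0) (j : ι) :
    ∑ i, ∑ k, ∑ m, W i j k m •
        (CliffordAlgebra.ι Q (v i) * CliffordAlgebra.ι Q (v k) * CliffordAlgebra.ι Q (v m)) = 0 ∧
      ∑ i, ∑ k, ∑ m, W i j k m •
        (CliffordAlgebra.ι Q (v k) * CliffordAlgebra.ι Q (v m) * CliffordAlgebra.ι Q (v i)) =
          0 := by
  refine sum_smul_mul_mul_eq_zero_of_cyclic_of_trace_eq_zero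
    (fun i k => CliffordAlgebra.ι_mul_ι_add_swap (v i) (v k)) (fun i k m => hskew' i j k m)
    (fun i k m => ?_) (htrace j)
  linear_combination hskew i j k m + hskew k j m i + hskew m j i k - hBianchi j i k m

theorem polar_eq_neg_two_mul_dotProduct {ι R : Type*} [Fintype ι] [CommRing R]
    {Q : QuadraticForm R (ι → R)} (hQ : ∀ x, Q x = -∑ i, x i ^ 2) (x y : ι → R) :
    QuadraticMap.polar Q x y = -2 * (x ⬝ᵥ y) := by
  simp only [QuadraticMap.polar, hQ, Pi.add_apply, dotProduct, Finset.mul_sum,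
    ← Finset.sum_neg_distrib, ← Finset.sum_sub_distrib]
  exact Finset.sum_congr rfl fun i _ => by ring

theorem sum_polar_single_mul {ι R : Type*} [Fintype ι] [DecidableEq ι] [CommRing R]
    {Q : QuadraticForm R (ι → R)} (hQ : ∀ x, Q x = -∑ i, x i ^ 2) (B : ι → ι → R) :
    ∑ k, ∑ l, QuadraticMap.polar Q (Pi.single k 1) (Pi.single l 1) * B k l =
      -2 * ∑ k, B k k := by
  simp [polar_eq_neg_two_mul_dotProduct hQ, Pi.single_apply, Finset.mul_sum]

theorem weyl_clifford_contraction_zero (n : ℕ) (hn : 4 ≤ n)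
    (Q : QuadraticForm ℝ (Fin n → ℝ)) (hQ : ∀ x, Q x = -∑ i, x i ^ 2)
    (W : Fin n → Fin n → Fin n → Fin n → ℝ)
    (h1 : ∀ i j k l, W i j k l = -W j i k l)
    (h2 : ∀ i j k l, W i j k l = -W i j l k)
    (h3 : ∀ i j k l, W i j k l = W k l i j)
    (hBianchi : ∀ i j k l, W i j k l + W i k l j + W i l j k = 0)
    (htrace : ∀ i j, ∑ k, W k i k j = 0) :
    ∀ j : Fin n,
      (∑ i, ∑ k, ∑ m, W i j k m •
          (cliffordBasis Q i * cliffordBasis Q k * cliffordBasis Q m)) = 0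
      ∧ (∑ i, ∑ k, ∑ m, W i j k m •
          (cliffordBasis Q k * cliffordBasis Q m * cliffordBasis Q i)) = 0 :=
  weyl_clifford_contraction_zero_general Q (fun i => Pi.single i 1) h1 h2 hBianchi fun i j => by
    rw [sum_polar_single_mul hQ fun k l => W k i l j, htrace, mul_zero]
end
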